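/- arXiv:2504.03211 — 3 statements merged into one kernel-verified Lean document; each statement's English description precedes it below -/
import Mathlib

section
/- Fix any t ≥ 1 and ε ≥ 0, any perfectly calibrated predictor g̃, and any post-processing plan χ that is feasible for (g̃, ε, t). Then the predictor f generated by (g̃, χ) is well-defined (each f_i is a finitely supported probability distribution on [0,1]) and is (ε,ℓ_t)-calibrated, i.e., ECE_t(f) ≤ ε. -/
open Finset

noncomputable section

namespace PersuasiveCalibration

/-- The environment of the persuasive calibration problem: `n` events with
probabilities `lam i > 0` summing to one and sorted expected outcomes `theta i ∈ [0,1]`. -/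
structure Setup (n : ℕ) : Type where
  lam : Fin n → ℝ
  theta : Fin n → ℝ
  lam_pos : ∀ i, 0 < lam i
  lam_sum : ∑ i, lam i = 1
  theta_mono : Monotone theta
  theta_mem : ∀ i, theta i ∈ Set.Icc (0 : ℝ) 1

variable {n : ℕ}

/-- A finitely supported probability distribution on `[0,1]`. -/
def IsDist (μ : ℝ →₀ ℝ) : Prop :=
  (∀ p, 0 ≤ μ p) ∧ (∀ p ∈ μ.support, p ∈ Set.Icc (0 : ℝ) 1) ∧ (∑ p ∈ μ.support, μ p) = 1

/-- A predictor assigns to each event a finitely supported probability distribution on `[0,1]`. -/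
def IsPredictor (f : Fin n → ℝ →₀ ℝ) : Prop := ∀ i, IsDist (f i)

/-- The (unconditional) prediction space of a predictor. -/
def suppF (f : Fin n → ℝ →₀ ℝ) : Finset ℝ := Finset.univ.biUnion fun i => (f i).support

/-- The marginalized predictor `f(p) = ∑ i, λ i * f i p`. -/
def marginal (S : Setup n) (f : Fin n → ℝ →₀ ℝ) (p : ℝ) : ℝ := ∑ i, S.lam i * f i p

/-- The true expected outcome conditional on the prediction `p`. -/
def kappa (S : Setup n) (f : Fin n → ℝ →₀ ℝ) (p : ℝ) : ℝ :=
  (∑ i, S.lam i * f i p * S.theta i) / marginal S f p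

/-- The `ℓ_t`-norm expected calibration error of a predictor. -/
def ECE (S : Setup n) (t : ℝ) (f : Fin n → ℝ →₀ ℝ) : ℝ :=
  (∑ p ∈ suppF f, marginal S f p * |kappa S f p - p| ^ t) ^ (1 / t)

/-- The principal's expected payoff from predictor `f` with indirect utilities `U i`. -/
def payoff (S : Setup n) (U : Fin n → ℝ → ℝ) (f : Fin n → ℝ →₀ ℝ) : ℝ :=
  ∑ i, S.lam i * ∑ p ∈ (f i).support, f i p * U i p

/-- The principal's payoff in the event-independent setting. -/
def payoffEI (S : Setup n) (U : ℝ → ℝ) (f : Fin n → ℝ →₀ ℝ) : ℝ :=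
  payoff S (fun _ => U) f

/-- A predictor is perfectly calibrated if `κ(q) = q` on its support. -/
def PerfectlyCalibrated (S : Setup n) (g : Fin n → ℝ →₀ ℝ) : Prop :=
  ∀ q ∈ suppF g, kappa S g q = q

/-- An event-independent post-processing plan: a finitely supported probability
distribution on `[0,1] × [0,1]`; the first coordinate is `q`, the second is `p`. -/
def IsPlan (χ : ℝ × ℝ →₀ ℝ) : Prop :=
  (∀ x, 0 ≤ χ x) ∧ (∀ x ∈ χ.support, x.1 ∈ Set.Icc (0 : ℝ) 1 ∧ x.2 ∈ Set.Icc (0 : ℝ) 1) ∧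
    (∑ x ∈ χ.support, χ x) = 1

/-- The `ℓ_t` calibration cost `∑ χ(q,p) |q - p|^t` of a plan. -/
def planCost (t : ℝ) (χ : ℝ × ℝ →₀ ℝ) : ℝ := ∑ x ∈ χ.support, χ x * |x.1 - x.2| ^ t

/-- The `q`-marginal `∑_p χ(q, p)` of a plan. -/
def planMargQ (χ : ℝ × ℝ →₀ ℝ) (q : ℝ) : ℝ :=
  ∑ x ∈ χ.support.filter fun x => x.1 = q, χ x

/-- Feasibility of a post-processing plan for a perfectly calibrated predictor `g` and
an `ℓ_t` ECE budget `ε`. -/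
def FeasiblePlan (S : Setup n) (t ε : ℝ) (g : Fin n → ℝ →₀ ℝ) (χ : ℝ × ℝ →₀ ℝ) : Prop :=
  planCost t χ ≤ ε ^ t ∧ ∀ q, planMargQ χ q = marginal S g q

/-- The value `f_i(p) = ∑_q (g̃_i(q)/g(q)) χ(q,p)` of the predictor generated by `(g̃, χ)`. -/
def genVal (S : Setup n) (g : Fin n → ℝ →₀ ℝ) (χ : ℝ × ℝ →₀ ℝ) (i : Fin n) (p : ℝ) : ℝ :=
  ∑ q ∈ suppF g, g i q / marginal S g q * χ (q, p)

/-- A predictor generated by some perfectly calibrated predictor and some feasible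
event-independent post-processing plan. -/
def IsGenerated (S : Setup n) (t ε : ℝ) (f : Fin n → ℝ →₀ ℝ) : Prop :=
  ∃ (g : Fin n → ℝ →₀ ℝ) (χ : ℝ × ℝ →₀ ℝ),
    IsPredictor g ∧ PerfectlyCalibrated S g ∧ IsPlan χ ∧ FeasiblePlan S t ε g χ ∧
      ∀ i p, f i p = genVal S g χ i p

/-- The CDF of a finitely supported distribution. -/
def cdf (μ : ℝ →₀ ℝ) (x : ℝ) : ℝ := ∑ q ∈ μ.support.filter fun q => q ≤ x, μ q

/-- The CDF of the distribution placing mass `λ_i` at `θ_i`. -/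
def priorCdf (S : Setup n) (x : ℝ) : ℝ :=
  ∑ i ∈ Finset.univ.filter fun i => S.theta i ≤ x, S.lam i

/-- `μ` is a mean-preserving contraction of the distribution putting mass `λ_i` on `θ_i`. -/
def MPCprior (S : Setup n) (μ : ℝ →₀ ℝ) : Prop :=
  (∀ s ∈ Set.Icc (0 : ℝ) 1,
      (∫ x in (0 : ℝ)..s, cdf μ x) ≤ ∫ x in (0 : ℝ)..s, priorCdf S x) ∧
    (∫ x in (0 : ℝ)..(1 : ℝ), cdf μ x) = ∫ x in (0 : ℝ)..(1 : ℝ), priorCdf S x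

/-- The objective `∑ χ(q,p) U(p)` of the program LP-TwoStep. -/
def LPobj (U : ℝ → ℝ) (χ : ℝ × ℝ →₀ ℝ) : ℝ := ∑ x ∈ χ.support, χ x * U x.2

/-- Feasibility for the program LP-TwoStep. -/
def LPFeasible (S : Setup n) (ε t : ℝ) (χ : ℝ × ℝ →₀ ℝ) (g : ℝ →₀ ℝ) : Prop :=
  (∀ x, 0 ≤ χ x) ∧
  (∀ x ∈ χ.support, x.1 ∈ Set.Icc (0 : ℝ) 1 ∧ x.2 ∈ Set.Icc (0 : ℝ) 1) ∧
  planCost t χ ≤ ε ^ t ∧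
  (∀ q, planMargQ χ q = g q) ∧ IsDist g ∧ MPCprior S g

/-- The optimal value of LP-TwoStep. -/
def OPTLP (S : Setup n) (ε t : ℝ) (U : ℝ → ℝ) : ℝ :=
  sSup {v | ∃ (χ : ℝ × ℝ →₀ ℝ) (g : ℝ →₀ ℝ), LPFeasible S ε t χ g ∧ v = LPobj U χ}

/-- Symmetric linear-tailed convex function with linear tails `[0, xL]`, `[xH, 1]` and
tail slopes `s1`, `s2` of equal absolute value. -/
def SymLinTailedConvex (Γ : ℝ → ℝ) (xL xH s1 s2 : ℝ) : Prop :=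
  ConvexOn ℝ (Set.Icc (0 : ℝ) 1) Γ ∧ 0 ≤ xL ∧ xL ≤ xH ∧ xH ≤ 1 ∧ |s1| = |s2| ∧
    (∃ c1, ∀ x ∈ Set.Icc (0 : ℝ) xL, Γ x = c1 + s1 * x) ∧
    (∃ c2, ∀ x ∈ Set.Icc xH (1 : ℝ), Γ x = c2 + s2 * x)

/-- Tuples `(i, j, q, p)` indexing a bi-event post-processing plan. -/
abbrev BiTuple (n : ℕ) := Fin n × Fin n × ℝ × ℝ

/-- The contribution ratio `r_{i,j}(q)`. -/
def ratio (S : Setup n) (i j : Fin n) (q : ℝ) : ℝ :=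
  if S.theta i < S.theta j then (S.theta j - q) / (S.theta j - S.theta i) else 1

/-- The contribution of the tuple `x = (i', j', q, p)` to event `i`:
`r_{i,j'}(q)` if `i' = i`, and `1 - r_{i',i}(q)` if `j' = i ≠ i'`. -/
def contrib (S : Setup n) (x : BiTuple n) (i : Fin n) : ℝ :=
  (if x.1 = i then ratio S x.1 x.2.1 x.2.2.1 else 0) +
    (if x.2.1 = i ∧ x.1 ≠ i then 1 - ratio S x.1 x.2.1 x.2.2.1 else 0)

/-- A bi-event post-processing plan. -/
def IsBiPlan (S : Setup n) (χ : BiTuple n →₀ ℝ) : Prop :=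
  (∀ x, 0 ≤ χ x) ∧
    ∀ x ∈ χ.support, x.1 ≤ x.2.1 ∧ x.2.2.1 ∈ Set.Icc (0 : ℝ) 1 ∧
      x.2.2.2 ∈ Set.Icc (0 : ℝ) 1 ∧ S.theta x.1 ≤ x.2.2.1 ∧ x.2.2.1 ≤ S.theta x.2.1

/-- Feasibility of a bi-event post-processing plan for `ℓ_t` ECE budget `ε`. -/
def FeasibleBiPlan (S : Setup n) (t ε : ℝ) (χ : BiTuple n →₀ ℝ) : Prop :=
  IsBiPlan S χ ∧
    (∑ x ∈ χ.support, χ x * |x.2.2.1 - x.2.2.2| ^ t) ≤ ε ^ t ∧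
    ∀ i, (∑ x ∈ χ.support, χ x * contrib S x i) = S.lam i

/-- The value `f_i(p)` of the predictor generated by a bi-event post-processing plan. -/
def genValBi (S : Setup n) (χ : BiTuple n →₀ ℝ) (i : Fin n) (p : ℝ) : ℝ :=
  1 / S.lam i * ∑ x ∈ χ.support.filter fun x => x.2.2.2 = p, χ x * contrib S x i

/-- The objective of LP-TwoStep+: `∑ χ_{i,j}(q,p) U_{i,j}(q,p)`. -/
def biObj (S : Setup n) (U : Fin n → ℝ → ℝ) (χ : BiTuple n →₀ ℝ) : ℝ :=
  ∑ x ∈ χ.support, χ x * (ratio S x.1 x.2.1 x.2.2.1 * U x.1 x.2.2.2 +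
    (1 - ratio S x.1 x.2.1 x.2.2.1) * U x.2.1 x.2.2.2)

/-- The optimal value of LP-TwoStep+. -/
def OPTBi (S : Setup n) (U : Fin n → ℝ → ℝ) (t ε : ℝ) : ℝ :=
  sSup {v | ∃ χ : BiTuple n →₀ ℝ, FeasibleBiPlan S t ε χ ∧ v = biObj S U χ}

/-- `U` is piecewise constant with all its discontinuity points in `Z`. -/
def PiecewiseConstWrt (Z : Finset ℝ) (U : ℝ → ℝ) : Prop :=
  ∀ x ∈ Set.Icc (0 : ℝ) 1, ∀ y ∈ Set.Icc (0 : ℝ) 1,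
    (∀ z ∈ Z, z ∉ Set.uIcc x y) → U x = U y

/-- The bound `S = ⌈2 ln(1/δ) / ln(1+δ)⌉` of the second discretization layer. -/
def Sbound (δ : ℝ) : ℕ := ⌈2 * Real.log (1 / δ) / Real.log (1 + δ)⌉₊

/-- The instance-dependent two-layer discretized set `S_δ`. -/
def gridSet (S : Setup n) (Z : Finset ℝ) (ε t δ : ℝ) : Set ℝ :=
  ({x : ℝ | ∃ k : ℕ, x = (k : ℝ) * δ} ∪ {(1 : ℝ)} ∪ Set.range S.theta ∪ (↑Z : Set ℝ) ∪
      {x : ℝ | ∃ z ∈ (↑Z : Set ℝ) ∪ Set.range S.theta, ∃ s : ℕ, s ≤ Sbound δ ∧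
        (x = z + (ε ^ t * δ * (1 + δ) ^ s) ^ (1 / t) ∨
          x = z - (ε ^ t * δ * (1 + δ) ^ s) ^ (1 / t))}) ∩
    Set.Icc (0 : ℝ) 1

/-- Feasibility for the discretized program LP-DiscTwoStep+. -/
def DiscFeasibleBiPlan (S : Setup n) (Z : Finset ℝ) (t ε δ : ℝ) (χ : BiTuple n →₀ ℝ) : Prop :=
  FeasibleBiPlan S t ε χ ∧
    ∀ x ∈ χ.support, x.2.2.1 ∈ gridSet S Z ε t δ ∧ x.2.2.2 ∈ gridSet S Z ε t δ

/-- The optimal value of LP-DiscTwoStep+. -/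
def OPTBiDisc (S : Setup n) (U : Fin n → ℝ → ℝ) (Z : Finset ℝ) (t ε δ : ℝ) : ℝ :=
  sSup {v | ∃ χ : BiTuple n →₀ ℝ, DiscFeasibleBiPlan S Z t ε δ χ ∧ v = biObj S U χ}

/-- A Bayesian persuasion instance with signal-dependent bias: states `θ_i` with
prior `λ`, actions `A`, sender utility `u a i = u(a, θ_i) ≥ 0`, and receiver utility
determined by `v1 a = v(a,1)` and `v0 a = v(a,0)`. -/
structure PSetup (n : ℕ) (A : Type*) : Type _ where
  lam : Fin n → ℝ
  theta : Fin n → ℝ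
  u : A → Fin n → ℝ
  v1 : A → ℝ
  v0 : A → ℝ
  lam_pos : ∀ i, 0 < lam i
  lam_sum : ∑ i, lam i = 1
  theta_mem : ∀ i, theta i ∈ Set.Icc (0 : ℝ) 1
  u_nonneg : ∀ a i, 0 ≤ u a i

variable {A σT : Type*}

/-- The receiver's utility from action `a` at belief mean `x`. -/
def rcvU (P : PSetup n A) (a : A) (x : ℝ) : ℝ := x * P.v1 a + (1 - x) * P.v0 a

/-- The total probability `m(σ)` of a signal `σ`. -/
def mass [Fintype σT] (P : PSetup n A) (π : Fin n → σT → ℝ) (σ : σT) : ℝ :=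
  ∑ i, P.lam i * π i σ

/-- The biased posterior mean `p(σ)` of the receiver upon signal `σ`. -/
def belief [Fintype σT] (P : PSetup n A) (π : Fin n → σT → ℝ) (b : σT → ℝ) (σ : σT) : ℝ :=
  (b σ + ∑ i, P.lam i * π i σ * P.theta i) / mass P π σ

/-- Validity of a sender strategy `(π, b)`. -/
def ValidStrategy [Fintype σT] (P : PSetup n A) (π : Fin n → σT → ℝ) (b : σT → ℝ) : Prop :=
  (∀ i σ, 0 ≤ π i σ) ∧ (∀ i, ∑ σ, π i σ = 1) ∧
    ∀ σ, 0 < mass P π σ → belief P π b σ ∈ Set.Icc (0 : ℝ) 1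

/-- `astar` is a receiver best-response selection for the strategy `(π, b)`. -/
def BestResponse [Fintype σT] (P : PSetup n A) (π : Fin n → σT → ℝ) (b : σT → ℝ)
    (astar : σT → A) : Prop :=
  ∀ σ, 0 < mass P π σ → ∀ a, rcvU P a (belief P π b σ) ≤ rcvU P (astar σ) (belief P π b σ)

/-- The bounded-rationality constraint on the total bias. -/
def BRconstraint [Fintype σT] (P : PSetup n A) (t ε : ℝ) (π : Fin n → σT → ℝ)
    (b : σT → ℝ) : Prop :=
  (∑ σ, mass P π σ * |b σ / mass P π σ| ^ t) ^ (1 / t) ≤ ε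

/-- The sender's expected payoff from strategy `π` with receiver selection `astar`. -/
def senderPayoff [Fintype σT] (P : PSetup n A) (π : Fin n → σT → ℝ) (astar : σT → A) : ℝ :=
  ∑ i, P.lam i * ∑ σ, π i σ * P.u (astar σ) i

/-- Feasibility for the action-recommendation program P-ActRec. -/
def PActRecFeasible [Fintype A] (P : PSetup n A) (t ε : ℝ)
    (π : Fin n → A → ℝ) (b : A → ℝ) : Prop :=
  (∀ i a, 0 ≤ π i a) ∧ (∀ i, ∑ a, π i a = 1) ∧
  (∀ a, mass P π a = 0 → b a = 0) ∧
  (∑ a, mass P π a * |b a / mass P π a| ^ t) ≤ ε ^ t ∧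
  (∀ a, 0 ≤ b a + ∑ i, P.lam i * π i a * P.theta i) ∧
  (∀ a, b a + ∑ i, P.lam i * π i a * P.theta i ≤ mass P π a) ∧
  ∀ a a' : A,
    (b a + ∑ i, P.lam i * π i a * P.theta i) * P.v1 a' +
        (mass P π a - (b a + ∑ i, P.lam i * π i a * P.theta i)) * P.v0 a' ≤
      (b a + ∑ i, P.lam i * π i a * P.theta i) * P.v1 a +
        (mass P π a - (b a + ∑ i, P.lam i * π i a * P.theta i)) * P.v0 a

/-- The sender-side marginal probability of recommendation `a` (calibration model). -/
def pmass [Fintype A] (S : Setup n) (π : Fin n → A → ℝ) (a : A) : ℝ := ∑ i, S.lam i * π i a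

/-- The biased posterior mean associated with recommendation `a` (calibration model). -/
def pbelief [Fintype A] (S : Setup n) (π : Fin n → A → ℝ) (b : A → ℝ) (a : A) : ℝ :=
  (b a + ∑ i, S.lam i * π i a * S.theta i) / pmass S π a

/-- The predictor generated by a perfectly calibrated predictor `g̃`
and a feasible post-processing plan `χ` is a well-defined predictor and is
`(ε, ℓ_t)`-calibrated. -/
theorem statement0 {n : ℕ} (S : Setup n) (t ε : ℝ) (ht : 1 ≤ t) (hε : 0 ≤ ε)
    (g : Fin n → ℝ →₀ ℝ) (hg : IsPredictor g) (hgcal : PerfectlyCalibrated S g)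
    (χ : ℝ × ℝ →₀ ℝ) (hχ : IsPlan χ) (hfeas : FeasiblePlan S t ε g χ) :
    ∃ f : Fin n → ℝ →₀ ℝ,
      (∀ i p, f i p = genVal S g χ i p) ∧ IsPredictor f ∧ ECE S t f ≤ ε := by
  obtain ⟨hχ0, hχI, hχ1⟩ := hχ
  obtain ⟨hcost, hmarg⟩ := hfeas
  set Q := suppF g with hQ
  set P := χ.support.image Prod.snd with hP
  have hmemP : ∀ q p, χ (q, p) ≠ 0 → p ∈ P := fun q p h =>
    Finset.mem_image.2 ⟨(q, p), Finsupp.mem_support_iff.2 h, rfl⟩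
  have hm0 : ∀ q, 0 ≤ marginal S g q := fun q =>
    Finset.sum_nonneg fun i _ => mul_nonneg (S.lam_pos i).le ((hg i).1 q)
  have hgQ : ∀ i q, q ∉ Q → g i q = 0 := by
    intro i q hq
    by_contra h
    exact hq (Finset.mem_biUnion.2 ⟨i, Finset.mem_univ _, Finsupp.mem_support_iff.2 h⟩)
  have hmpos : ∀ q ∈ Q, 0 < marginal S g q := by
    intro q hq
    obtain ⟨i, _, hi⟩ := Finset.mem_biUnion.1 hq
    refine Finset.sum_pos' (fun i _ => mul_nonneg (S.lam_pos i).le ((hg i).1 q))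
      ⟨i, Finset.mem_univ _, mul_pos (S.lam_pos i) ?_⟩
    exact lt_of_le_of_ne ((hg i).1 q) (Ne.symm (Finsupp.mem_support_iff.1 hi))
  have hχQ : ∀ q p, χ (q, p) ≠ 0 → q ∈ Q := by
    intro q p h
    by_contra hq
    have h0 : marginal S g q = 0 := by
      unfold marginal
      exact Finset.sum_eq_zero fun i _ => by rw [hgQ i q hq, mul_zero]
    have h1 := hmarg q
    rw [h0] at h1
    have h2 := (Finset.sum_eq_zero_iff_of_nonneg (fun x _ => hχ0 x)).1 h1 (q, p)
      (Finset.mem_filter.2 ⟨Finsupp.mem_support_iff.2 h, rfl⟩)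
    exact h h2
  have hsub : χ.support ⊆ Q ×ˢ P := by
    rintro ⟨q, p⟩ h
    have h' := Finsupp.mem_support_iff.1 h
    exact Finset.mem_product.2 ⟨hχQ q p h', hmemP q p h'⟩
  have hrow : ∀ q, ∑ p ∈ P, χ (q, p) = marginal S g q := by
    intro q
    rw [← hmarg q]
    unfold planMargQ
    symm
    refine Finset.sum_bij_ne_zero (fun x _ _ => x.2) ?_ ?_ ?_ ?_
    · intro x _ h
      exact hmemP x.1 x.2 h
    · intro x hx _ y hy _ hxy
      exact Prod.ext (((Finset.mem_filter.1 hx).2).trans ((Finset.mem_filter.1 hy).2).symm) hxy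
    · intro p _ h
      exact ⟨(q, p), Finset.mem_filter.2 ⟨Finsupp.mem_support_iff.2 h, rfl⟩, h, rfl⟩
    · rintro ⟨a, b⟩ hx _
      have : a = q := (Finset.mem_filter.1 hx).2
      rw [this]
  have hne : ∀ i p, genVal S g χ i p ≠ 0 → p ∈ P := by
    intro i p h
    obtain ⟨q, _, hq⟩ := Finset.exists_ne_zero_of_sum_ne_zero h
    exact hmemP q p (right_ne_zero_of_mul hq)
  let f : Fin n → ℝ →₀ ℝ := fun i => Finsupp.onFinset P (genVal S g χ i) (hne i)
  have hf : ∀ i p, f i p = genVal S g χ i p := fun i p => rfl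
  have hsuppf : ∀ i, (f i).support ⊆ P := fun i => Finsupp.support_onFinset_subset
  have hPI : ∀ p ∈ P, p ∈ Set.Icc (0 : ℝ) 1 := by
    intro p hp
    obtain ⟨x, hx, rfl⟩ := Finset.mem_image.1 hp
    exact (hχI x hx).2
  have hf0 : ∀ i p, 0 ≤ f i p := fun i p =>
    Finset.sum_nonneg fun q _ => mul_nonneg (div_nonneg ((hg i).1 q) (hm0 q)) (hχ0 _)
  have hmf : ∀ p, marginal S f p = ∑ q ∈ Q, χ (q, p) := by
    intro p
    unfold marginal
    simp only [hf, genVal, Finset.mul_sum]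
    rw [Finset.sum_comm]
    refine Finset.sum_congr rfl fun q hq => ?_
    have h := (hmpos q hq).ne'
    calc ∑ i, S.lam i * (g i q / marginal S g q * χ (q, p))
        = (∑ i, S.lam i * g i q) * (χ (q, p) / marginal S g q) := by
          rw [Finset.sum_mul]
          exact Finset.sum_congr rfl fun i _ => by ring
      _ = marginal S g q * (χ (q, p) / marginal S g q) := rfl
      _ = χ (q, p) := by field_simp
  have hnum : ∀ p, ∑ i, S.lam i * f i p * S.theta i = ∑ q ∈ Q, χ (q, p) * q := by
    intro p
    simp only [hf, genVal, Finset.mul_sum, Finset.sum_mul]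
    rw [Finset.sum_comm]
    refine Finset.sum_congr rfl fun q hq => ?_
    calc ∑ i, S.lam i * (g i q / marginal S g q * χ (q, p)) * S.theta i
        = χ (q, p) * ((∑ i, S.lam i * g i q * S.theta i) / marginal S g q) := by
          rw [Finset.sum_div, Finset.mul_sum]
          exact Finset.sum_congr rfl fun i _ => by ring
      _ = χ (q, p) * kappa S g q := rfl
      _ = χ (q, p) * q := by rw [hgcal q hq]
  have hterm : ∀ p, marginal S f p * |kappa S f p - p| ^ t
      ≤ ∑ q ∈ Q, χ (q, p) * |q - p| ^ t := by
    intro p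
    have hM0 : 0 ≤ marginal S f p := by
      rw [hmf]; exact Finset.sum_nonneg fun q _ => hχ0 _
    rcases hM0.eq_or_lt with h | h
    · rw [← h, zero_mul]
      exact Finset.sum_nonneg fun q _ => mul_nonneg (hχ0 _) (Real.rpow_nonneg (abs_nonneg _) _)
    set M := marginal S f p with hM
    have hw1 : ∑ q ∈ Q, χ (q, p) / M = 1 := by
      rw [← Finset.sum_div, ← hmf, div_self h.ne']
    have hw0 : ∀ q ∈ Q, 0 ≤ χ (q, p) / M := fun q _ => div_nonneg (hχ0 _) h.le
    have hk : kappa S f p - p = ∑ q ∈ Q, χ (q, p) / M * (q - p) := by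
      have e1 : kappa S f p = ∑ q ∈ Q, χ (q, p) / M * q := by
        unfold kappa
        rw [hnum, Finset.sum_div]
        exact Finset.sum_congr rfl fun q _ => by ring
      simp only [mul_sub, Finset.sum_sub_distrib]
      rw [← Finset.sum_mul, hw1, one_mul, e1]
    have habs : |kappa S f p - p| ≤ ∑ q ∈ Q, χ (q, p) / M * |q - p| := by
      rw [hk]
      refine (Finset.abs_sum_le_sum_abs _ _).trans (Finset.sum_le_sum fun q hq => ?_)
      rw [abs_mul, abs_of_nonneg (hw0 q hq)]
    have hj := Real.rpow_arith_mean_le_arith_mean_rpow Q (fun q => χ (q, p) / M)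
      (fun q => |q - p|) hw0 hw1 (fun q _ => abs_nonneg _) ht
    have h3 := (Real.rpow_le_rpow (abs_nonneg _) habs (by linarith)).trans hj
    calc M * |kappa S f p - p| ^ t ≤ M * ∑ q ∈ Q, χ (q, p) / M * |q - p| ^ t :=
          mul_le_mul_of_nonneg_left h3 h.le
      _ = _ := by
          rw [Finset.mul_sum]
          refine Finset.sum_congr rfl fun q _ => ?_
          field_simp
  refine ⟨f, hf, fun i => ⟨hf0 i, fun p hp => hPI p (hsuppf i hp), ?_⟩, ?_⟩
  · rw [Finset.sum_subset (hsuppf i) (fun p _ h => Finsupp.notMem_support_iff.1 h)]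
    simp only [hf, genVal]
    rw [Finset.sum_comm, ← (hg i).2.2]
    rw [Finset.sum_subset (s₁ := (g i).support) (s₂ := suppF g)
      (fun q hq => Finset.mem_biUnion.2 ⟨i, Finset.mem_univ _, hq⟩)
      (fun p _ h => Finsupp.notMem_support_iff.1 h)]
    refine Finset.sum_congr rfl fun q hq => ?_
    rw [← Finset.mul_sum, hrow, div_mul_cancel₀ _ (hmpos q hq).ne']
  · have hpc : planCost t χ = ∑ p ∈ P, ∑ q ∈ Q, χ (q, p) * |q - p| ^ t := by
      unfold planCost
      rw [Finset.sum_subset hsub (fun x _ h => by rw [Finsupp.notMem_support_iff.1 h, zero_mul]),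
        Finset.sum_product, Finset.sum_comm]
    have hle : ∑ p ∈ suppF f, marginal S f p * |kappa S f p - p| ^ t ≤ ε ^ t := by
      refine (Finset.sum_le_sum fun p _ => hterm p).trans ?_
      refine le_trans ?_ (hpc ▸ hcost)
      refine Finset.sum_le_sum_of_subset_of_nonneg ?_ fun p _ _ =>
        Finset.sum_nonneg fun q _ => mul_nonneg (hχ0 _) (Real.rpow_nonneg (abs_nonneg _) _)
      exact Finset.biUnion_subset.2 fun i _ => hsuppf i
    have ht0 : 0 < t := by linarith
    have hnn : 0 ≤ ∑ p ∈ suppF f, marginal S f p * |kappa S f p - p| ^ t := by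
      refine Finset.sum_nonneg fun p _ => mul_nonneg ?_ (Real.rpow_nonneg (abs_nonneg _) _)
      rw [hmf]; exact Finset.sum_nonneg fun q _ => hχ0 _
    unfold ECE
    refine (Real.rpow_le_rpow hnn hle (by positivity)).trans ?_
    rw [← Real.rpow_mul hε, mul_one_div_cancel ht0.ne', Real.rpow_one]

end PersuasiveCalibration
end
end

section
/- In the event-independent setting (U_i = U for all i), for every finitely supported (ε,ℓ_t)-calibrated predictor f with true-expected-outcome map κ, define g̃_i(q) = Σ_{p∈supp(f_i): κ(p)=q} f_i(p) for each event i and χ(q,p) = Σ_i λ_i·f_i(p)·1{κ(p)=q}. Then g̃ is a perfectly calibrated predictor, χ is a post-processing plan that is feasible for (g̃, ε, t), and the predictor f† generated by (g̃, χ) satisfies V(f†) = V(f). -/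
open Finset

noncomputable section

namespace PersuasiveCalibration

variable {n : ℕ}

variable {A σT : Type*}

section helpers

lemma h_mem_suppF (f : Fin n → ℝ →₀ ℝ) (p : ℝ) : p ∈ suppF f ↔ ∃ i, f i p ≠ 0 := by
  simp [suppF]

lemma h_zero (f : Fin n → ℝ →₀ ℝ) {p : ℝ} (hp : p ∉ suppF f) (i : Fin n) : f i p = 0 := by
  by_contra h
  exact hp ((h_mem_suppF f p).2 ⟨i, h⟩)

lemma h_sub (f : Fin n → ℝ →₀ ℝ) (i : Fin n) : (f i).support ⊆ suppF f := by
  intro p hp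
  exact (h_mem_suppF f p).2 ⟨i, by simpa using hp⟩

lemma h_marg_pos (S : Setup n) (f : Fin n → ℝ →₀ ℝ) (h0 : ∀ i p, 0 ≤ f i p) {p : ℝ}
    (hp : p ∈ suppF f) : 0 < marginal S f p := by
  obtain ⟨i, hi⟩ := (h_mem_suppF f p).1 hp
  exact Finset.sum_pos' (fun j _ => mul_nonneg (S.lam_pos j).le (h0 j p))
    ⟨i, Finset.mem_univ _, mul_pos (S.lam_pos i) (lt_of_le_of_ne (h0 i p) (Ne.symm hi))⟩

lemma h_marg_zero (S : Setup n) (f : Fin n → ℝ →₀ ℝ) {p : ℝ}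
    (hp : p ∉ suppF f) : marginal S f p = 0 :=
  Finset.sum_eq_zero fun i _ => by rw [h_zero f hp i, mul_zero]

lemma h_kappa_mul (S : Setup n) (f : Fin n → ℝ →₀ ℝ) (h0 : ∀ i p, 0 ≤ f i p) {p : ℝ}
    (hp : p ∈ suppF f) :
    ∑ i, S.lam i * f i p * S.theta i = kappa S f p * marginal S f p := by
  rw [kappa, div_mul_cancel₀ _ (h_marg_pos S f h0 hp).ne']

lemma h_kappa_mem (S : Setup n) (f : Fin n → ℝ →₀ ℝ) (h0 : ∀ i p, 0 ≤ f i p) {p : ℝ}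
    (hp : p ∈ suppF f) : kappa S f p ∈ Set.Icc (0 : ℝ) 1 := by
  have hm := h_marg_pos S f h0 hp
  have h1 : ∀ i, 0 ≤ S.lam i * f i p := fun i => mul_nonneg (S.lam_pos i).le (h0 i p)
  refine ⟨div_nonneg (Finset.sum_nonneg fun i _ => mul_nonneg (h1 i) (S.theta_mem i).1) hm.le, ?_⟩
  rw [kappa, div_le_one hm]
  exact Finset.sum_le_sum fun i _ => mul_le_of_le_one_right (h1 i) (S.theta_mem i).2

lemma h_dist_mem (f : Fin n → ℝ →₀ ℝ) (hf : IsPredictor f) {p : ℝ}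
    (hp : p ∈ suppF f) : p ∈ Set.Icc (0 : ℝ) 1 := by
  obtain ⟨i, hi⟩ := (h_mem_suppF f p).1 hp
  exact (hf i).2.1 p (by simpa using hi)

lemma h_sum (f : Fin n → ℝ →₀ ℝ) (u : ℝ → ℝ) (i : Fin n) :
    ∑ p ∈ (f i).support, f i p * u p = ∑ p ∈ suppF f, f i p * u p := by
  refine Finset.sum_subset (h_sub f i) fun p _ hp => ?_
  simp at hp
  simp [hp]

lemma h_sum1 (f : Fin n → ℝ →₀ ℝ) (hf : IsPredictor f) (i : Fin n) :
    ∑ p ∈ suppF f, f i p = 1 := by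
  have := h_sum f (fun _ => 1) i
  simp only [mul_one] at this
  rw [← this]; exact (hf i).2.2

lemma h_payoff (S : Setup n) (U : ℝ → ℝ) (f : Fin n → ℝ →₀ ℝ) (T : Finset ℝ)
    (hT : ∀ i, (f i).support ⊆ T) :
    payoffEI S U f = ∑ p ∈ T, marginal S f p * U p := by
  unfold payoffEI payoff marginal
  have : ∀ i, ∑ p ∈ (f i).support, f i p * U p = ∑ p ∈ T, f i p * U p := fun i => by
    refine Finset.sum_subset (hT i) fun p _ hp => ?_
    simp at hp
    simp [hp]
  simp_rw [this, Finset.mul_sum, Finset.sum_mul]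
  rw [Finset.sum_comm]
  simp_rw [mul_assoc]

end helpers

/-- In the event-independent setting, any `(ε, ℓ_t)`-calibrated
predictor `f` yields, via the canonical construction, a perfectly calibrated
predictor `g̃`, a feasible post-processing plan `χ`, and a generated predictor `f†`
with the same principal payoff. -/
theorem statement1 {n : ℕ} (S : Setup n) (t ε : ℝ) (ht : 1 ≤ t) (hε : 0 ≤ ε)
    (U : ℝ → ℝ) (hU0 : ∀ p ∈ Set.Icc (0 : ℝ) 1, 0 ≤ U p)
    (f : Fin n → ℝ →₀ ℝ) (hf : IsPredictor f) (hcal : ECE S t f ≤ ε)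
    (g : Fin n → ℝ →₀ ℝ)
    (hgdef : ∀ i q, g i q = ∑ p ∈ (f i).support.filter fun p => kappa S f p = q, f i p)
    (χ : ℝ × ℝ →₀ ℝ)
    (hχdef : ∀ q p, χ (q, p) = ∑ i, S.lam i * f i p * (if kappa S f p = q then 1 else 0)) :
    IsPredictor g ∧ PerfectlyCalibrated S g ∧ IsPlan χ ∧ FeasiblePlan S t ε g χ ∧
      ∃ fd : Fin n → ℝ →₀ ℝ, (∀ i p, fd i p = genVal S g χ i p) ∧ IsPredictor fd ∧
        payoffEI S U fd = payoffEI S U f := by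
  classical
  have h0 : ∀ i p, 0 ≤ f i p := fun i => (hf i).1
  have hg : ∀ i q, g i q = ∑ p ∈ (suppF f).filter fun p => kappa S f p = q, f i p := by
    intro i q
    rw [hgdef]
    refine Finset.sum_subset (Finset.filter_subset_filter _ (h_sub f i)) fun p hp hp' => ?_
    simp only [Finset.mem_filter, not_and, Finsupp.mem_support_iff] at hp hp'
    by_contra h
    exact hp' h hp.2
  have hχ : ∀ q p, χ (q, p) = if kappa S f p = q then marginal S f p else 0 := by
    intro q p
    rw [hχdef]
    split_ifs <;> simp [marginal]
  have g0 : ∀ i q, 0 ≤ g i q := fun i q => by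
    rw [hg]; exact Finset.sum_nonneg fun p _ => h0 i p
  have gmem : ∀ q ∈ suppF g, ∃ p ∈ suppF f, kappa S f p = q := by
    intro q hq
    obtain ⟨i, hi⟩ := (h_mem_suppF g q).1 hq
    rw [hg] at hi
    obtain ⟨p, hp, _⟩ := Finset.exists_ne_zero_of_sum_ne_zero hi
    exact ⟨p, (Finset.mem_filter.1 hp).1, (Finset.mem_filter.1 hp).2⟩
  have kmem : ∀ p ∈ suppF f, kappa S f p ∈ suppF g := by
    intro p hp
    obtain ⟨i, hi⟩ := (h_mem_suppF f p).1 hp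
    refine (h_mem_suppF g _).2 ⟨i, ?_⟩
    rw [hg]
    refine (Finset.sum_pos' (fun p _ => h0 i p) ⟨p, by simp [hp], ?_⟩).ne'
    exact lt_of_le_of_ne (h0 i p) (Ne.symm hi)
  have gsum : ∀ i, ∑ q ∈ suppF g, g i q = 1 := by
    intro i
    rw [← h_sum1 f hf i, ← Finset.sum_fiberwise_of_maps_to kmem]
    exact Finset.sum_congr rfl fun q _ => hg i q
  have hG : ∀ q, marginal S g q
      = ∑ p ∈ (suppF f).filter fun p => kappa S f p = q, marginal S f p := by
    intro q
    unfold marginal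
    rw [Finset.sum_comm]
    refine Finset.sum_congr rfl fun i _ => ?_
    rw [hg, Finset.mul_sum]
  have msum : ∑ p ∈ suppF f, marginal S f p = 1 := by
    unfold marginal
    rw [Finset.sum_comm]
    simp_rw [← Finset.mul_sum, h_sum1 f hf, mul_one, S.lam_sum]
  have isg : IsPredictor g := by
    intro i
    refine ⟨g0 i, fun q hq => ?_, ?_⟩
    · obtain ⟨p, hp, rfl⟩ := gmem q (h_sub g i hq)
      exact h_kappa_mem S f h0 hp
    · have := h_sum g (fun _ => 1) i
      simp only [mul_one] at this
      rw [this, gsum]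
  have χsupp : χ.support = (suppF f).image fun p => (kappa S f p, p) := by
    ext ⟨q, p⟩
    simp only [Finsupp.mem_support_iff, hχ, Finset.mem_image, Prod.mk.injEq]
    constructor
    · intro h
      split_ifs at h with hk
      · refine ⟨p, ?_, hk, rfl⟩
        by_contra hp
        exact h (h_marg_zero S f hp)
      · exact absurd rfl h
    · rintro ⟨p', hp', rfl, rfl⟩
      simp [(h_marg_pos S f h0 hp').ne']
  have χsum : ∀ u : ℝ × ℝ → ℝ, ∑ x ∈ χ.support, χ x * u x
      = ∑ p ∈ suppF f, marginal S f p * u (kappa S f p, p) := by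
    intro u
    rw [χsupp, Finset.sum_image (by intro a _ b _ h; exact (Prod.mk.inj h).2)]
    simp [hχ]
  have χ0 : ∀ x, 0 ≤ χ x := by
    rintro ⟨q, p⟩
    rw [hχ]
    split_ifs
    · exact Finset.sum_nonneg fun i _ => mul_nonneg (S.lam_pos i).le (h0 i p)
    · exact le_rfl
  have mq : ∀ q, ∑ p ∈ suppF f, χ (q, p) = marginal S g q := by
    intro q
    simp_rw [hG, Finset.sum_filter, hχ]
  have Gpos : ∀ q ∈ suppF g, 0 < marginal S g q := fun q hq => h_marg_pos S g g0 hq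
  refine ⟨isg, ?_, ⟨χ0, ?_, ?_⟩, ⟨?_, ?_⟩, ?_⟩
  · intro q hq
    rw [kappa, div_eq_iff (Gpos q hq).ne', hG, Finset.mul_sum]
    have : ∀ i, S.lam i * g i q * S.theta i
        = ∑ p ∈ (suppF f).filter fun p => kappa S f p = q, S.lam i * f i p * S.theta i := by
      intro i
      rw [hg, Finset.mul_sum, Finset.sum_mul]
    simp_rw [this]
    rw [Finset.sum_comm]
    refine Finset.sum_congr rfl fun p hp => ?_
    obtain ⟨hp1, hp2⟩ := Finset.mem_filter.1 hp
    rw [← hp2]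
    exact h_kappa_mul S f h0 hp1
  · intro x hx
    rw [χsupp] at hx
    obtain ⟨p, hp, rfl⟩ := Finset.mem_image.1 hx
    exact ⟨h_kappa_mem S f h0 hp, h_dist_mem f hf hp⟩
  · have := χsum fun _ => 1
    simp only [mul_one] at this
    rw [this, msum]
  · have h1 : planCost t χ = ∑ p ∈ suppF f, marginal S f p * |kappa S f p - p| ^ t :=
      χsum fun x => |x.1 - x.2| ^ t
    have h2 : 0 ≤ planCost t χ :=
      Finset.sum_nonneg fun x _ => mul_nonneg (χ0 x) (Real.rpow_nonneg (abs_nonneg _) _)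
    unfold ECE at hcal
    rw [← h1] at hcal
    have ht0 : (0 : ℝ) < t := by linarith
    have h3 := Real.rpow_le_rpow (Real.rpow_nonneg h2 _) hcal ht0.le
    rwa [← Real.rpow_mul h2, one_div_mul_cancel ht0.ne', Real.rpow_one] at h3
  · intro q
    have := χsum fun x => if x.1 = q then 1 else 0
    simp only [mul_ite, mul_one, mul_zero] at this
    rw [planMargQ, Finset.sum_filter, this, hG, Finset.sum_filter]
  · have gz : ∀ i p, genVal S g χ i p ≠ 0 → p ∈ suppF f := by
      intro i p h
      by_contra hp
      refine h (Finset.sum_eq_zero fun q _ => ?_)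
      rw [hχ, h_marg_zero S f hp]
      simp
    have gv0 : ∀ i p, 0 ≤ genVal S g χ i p := fun i p =>
      Finset.sum_nonneg fun q hq => mul_nonneg (div_nonneg (g0 i q) (Gpos q hq).le) (χ0 _)
    refine ⟨fun i => Finsupp.onFinset (suppF f) (genVal S g χ i) (gz i),
      fun i p => rfl, fun i => ⟨gv0 i, ?_, ?_⟩, ?_⟩
    · intro p hp
      exact h_dist_mem f hf (Finsupp.support_onFinset_subset hp)
    · rw [Finset.sum_subset Finsupp.support_onFinset_subset
        (fun p _ hp => by simpa using hp)]
      simp only [Finsupp.onFinset_apply]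
      unfold genVal
      rw [Finset.sum_comm, ← gsum i]
      refine Finset.sum_congr rfl fun q hq => ?_
      rw [← Finset.mul_sum, mq, div_mul_cancel₀ _ (Gpos q hq).ne']
    · rw [h_payoff S U f (suppF f) (h_sub f), h_payoff S U _ (suppF f)
        (fun i => Finsupp.support_onFinset_subset)]
      refine Finset.sum_congr rfl fun p hp => ?_
      congr 1
      have : ∑ i, S.lam i * genVal S g χ i p = marginal S f p := by
        unfold genVal
        simp_rw [Finset.mul_sum]
        rw [Finset.sum_comm]
        have h4 : ∀ q ∈ suppF g,
            ∑ i, S.lam i * (g i q / marginal S g q * χ (q, p)) = χ (q, p) := by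
          intro q hq
          have h5 : ∀ i, S.lam i * (g i q / marginal S g q * χ (q, p))
              = S.lam i * g i q * (χ (q, p) / marginal S g q) := fun i => by ring
          simp_rw [h5]
          rw [← Finset.sum_mul]
          exact mul_div_cancel₀ _ (Gpos q hq).ne'
        rw [Finset.sum_congr rfl h4]
        simp_rw [hχ]
        rw [Finset.sum_ite_eq, if_pos (kmem p hp)]
      exact this

end PersuasiveCalibration
end
end

section
/- A finitely supported probability distribution g on [0,1] is a marginalized perfectly calibrated predictor (i.e., g(q) = Σ_i λ_i·g̃_i(q) for some perfectly calibrated predictor g̃) if and only if g is a mean-preserving contraction of the distribution on [0,1] placing mass λ_i at θ_i, i.e., g ∈ MPC(λ). -/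
open Finset

noncomputable section

namespace PersuasiveCalibration

variable {n : ℕ}

variable {A σT : Type*}

lemma conv_aux {c : ℝ → ℝ} (hc : ConvexOn ℝ Set.univ c) {t y z A B : ℝ} (hyz : y < z)
    (hty : t ≤ y) (h1 : c y = A + B * y) (h2 : c z = A + B * z) : A + B * t ≤ c t := by
  rcases hty.eq_or_lt with rfl | h
  · exact h1.ge
  · have := hc.slope_mono_adjacent (Set.mem_univ t) (Set.mem_univ z) h hyz
    rw [h1, h2, show A + B * z - (A + B * y) = B * (z - y) by ring,
      mul_div_cancel_right₀ _ (by linarith : z - y ≠ 0), div_le_iff₀ (by linarith)] at this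
    linarith

lemma hinge_induct (D : (ℝ → ℝ) →ₗ[ℝ] ℝ) (hone : D (fun _ => 1) = 0) (hid : D (fun t => t) = 0)
    (c : ℝ → ℝ) (hc : ConvexOn ℝ Set.univ c) (T : Finset ℝ)
    (hT : ∀ z ∈ T, 0 ≤ D (fun t => max (z - t) 0)) (hne : T.Nonempty) :
    ∃ (r : ℝ → ℝ) (A B : ℝ), 0 ≤ D r ∧ (∀ t ∈ T, r t = c t) ∧
      ∀ t, (∀ z ∈ T, t ≤ z) → r t = A + B * t ∧ A + B * t ≤ c t := by
  induction T using Finset.induction_on_min with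
  | empty => simp at hne
  | insert y T hy ih =>
    rcases T.eq_empty_or_nonempty with rfl | hTne
    · refine ⟨fun t => (c y - (c (y+1) - c y) * y) + (c (y+1) - c y) * t,
        (c y - (c (y+1) - c y) * y), (c (y+1) - c y), ?_, ?_, ?_⟩
      · have : (fun t : ℝ => (c y - (c (y+1) - c y) * y) + (c (y+1) - c y) * t)
          = (c y - (c (y+1) - c y) * y) • (fun _ => (1:ℝ)) + (c (y+1) - c y) • (fun t => t) := by
          ext t; simp
        rw [this, map_add, map_smul, map_smul, hone, hid]; simp
      · simp
      · intro t ht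
        refine ⟨rfl, ?_⟩
        exact conv_aux hc (lt_add_one y) (ht y (by simp)) (by ring) (by ring)
    · obtain ⟨r, A, B, hD, heq, haff⟩ := ih (fun z hz => hT z (by simp [hz])) hTne
      set z := T.min' hTne with hz
      have hzT : z ∈ T := T.min'_mem hTne
      have hzle : ∀ t ∈ T, z ≤ t := fun t ht => T.min'_le t ht
      have hyz : y < z := hy z hzT
      have hle : ∀ t, t ≤ z → r t = A + B * t ∧ A + B * t ≤ c t :=
        fun t ht => haff t (fun u hu => ht.trans (hzle u hu))
      set w := (c y - r y) / (z - y) with hw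
      have hw0 : 0 ≤ w := div_nonneg (by have := hle y hyz.le; linarith) (by linarith)
      have hwm : w * (z - y) = c y - r y := div_mul_cancel₀ _ (by linarith)
      have hry := (hle y hyz.le).1
      have hrz := (hle z le_rfl).1
      have hcz := heq z hzT
      refine ⟨r + w • (fun t => max (z - t) 0), A + w * z, B - w, ?_, ?_, ?_⟩
      · rw [map_add, map_smul, smul_eq_mul]
        have := hT z (by simp [hzT])
        positivity
      · intro t ht
        rcases Finset.mem_insert.1 ht with rfl | ht
        · simp only [Pi.add_apply, Pi.smul_apply, smul_eq_mul]
          rw [max_eq_left (by linarith)]; linarith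
        · simp only [Pi.add_apply, Pi.smul_apply, smul_eq_mul]
          rw [max_eq_right (by linarith [hzle t ht]), heq t ht]; ring
      · intro t ht
        have hty : t ≤ y := ht y (by simp)
        constructor
        · simp only [Pi.add_apply, Pi.smul_apply, smul_eq_mul]
          rw [max_eq_left (by linarith), (hle t (by linarith)).1]; ring
        · exact conv_aux hc hyz hty (by linarith) (by linarith)

lemma convex_order {ι κ : Type*} [Fintype ι] [Fintype κ] (l θ : ι → ℝ) (g x : κ → ℝ)
    (hl1 : ∑ i, l i = 1) (hg1 : ∑ k, g k = 1) (hmean : ∑ i, l i * θ i = ∑ k, g k * x k)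
    (hθ : ∀ i, θ i ∈ Set.Icc (0:ℝ) 1) (hx : ∀ k, x k ∈ Set.Icc (0:ℝ) 1)
    (hh : ∀ s ∈ Set.Icc (0:ℝ) 1, ∑ k, g k * max (s - x k) 0 ≤ ∑ i, l i * max (s - θ i) 0)
    (c : ℝ → ℝ) (hc : ConvexOn ℝ Set.univ c) :
    ∑ k, g k * c (x k) ≤ ∑ i, l i * c (θ i) := by
  classical
  let D : (ℝ → ℝ) →ₗ[ℝ] ℝ :=
    { toFun := fun f => ∑ i, l i * f (θ i) - ∑ k, g k * f (x k)
      map_add' := by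
        intro f f'
        simp only [Pi.add_apply, mul_add, Finset.sum_add_distrib]; ring
      map_smul' := by
        intro a f
        simp only [Pi.smul_apply, smul_eq_mul, RingHom.id_apply, mul_sub, Finset.mul_sum]
        congr 1 <;> exact Finset.sum_congr rfl (fun _ _ => by ring) }
  have hDdef : ∀ f, D f = ∑ i, l i * f (θ i) - ∑ k, g k * f (x k) := fun f => rfl
  have hκ : Nonempty κ := by
    by_contra h
    rw [not_nonempty_iff] at h
    simp at hg1
  obtain ⟨k0⟩ := hκ
  obtain ⟨r, A, B, h1, h2, -⟩ := hinge_induct D (by simp [hDdef, hl1, hg1])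
    (by simp [hDdef, hmean]) c hc
    (Finset.univ.image θ ∪ Finset.univ.image x) (by
      intro z hz
      have hz' : z ∈ Set.Icc (0:ℝ) 1 := by
        simp only [Finset.mem_union, Finset.mem_image, Finset.mem_univ, true_and] at hz
        rcases hz with ⟨i, rfl⟩ | ⟨i, rfl⟩
        · exact hθ i
        · exact hx i
      rw [hDdef]
      linarith [hh z hz']) ⟨x k0, by simp⟩
  rw [hDdef] at h1
  have e1 : ∀ i, r (θ i) = c (θ i) := fun i => h2 _ (by simp)
  have e2 : ∀ i, r (x i) = c (x i) := fun i => h2 _ (by simp)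
  simp only [e1, e2] at h1
  linarith

lemma strassen {ι κ : Type*} [Fintype ι] [Fintype κ] (l θ : ι → ℝ) (g x : κ → ℝ)
    (hl0 : ∀ i, 0 ≤ l i) (hg0 : ∀ k, 0 ≤ g k)
    (hl1 : ∑ i, l i = 1) (hg1 : ∑ k, g k = 1) (hmean : ∑ i, l i * θ i = ∑ k, g k * x k)
    (hθ : ∀ i, θ i ∈ Set.Icc (0:ℝ) 1) (hx : ∀ k, x k ∈ Set.Icc (0:ℝ) 1)
    (hh : ∀ s ∈ Set.Icc (0:ℝ) 1, ∑ k, g k * max (s - x k) 0 ≤ ∑ i, l i * max (s - θ i) 0) :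
    ∃ P : ι × κ → ℝ, (∀ a, 0 ≤ P a) ∧ (∀ i, ∑ k, P (i, k) = l i) ∧ (∀ k, ∑ i, P (i, k) = g k) ∧
      ∀ k, ∑ i, P (i, k) * (θ i - x k) = 0 := by
  classical
  let L : (ι × κ → ℝ) →ₗ[ℝ] (ι ⊕ κ ⊕ κ → ℝ) :=
    { toFun := fun P => Sum.elim (fun i => ∑ k, P (i, k))
        (Sum.elim (fun k => ∑ i, P (i, k)) (fun k => ∑ i, P (i, k) * (θ i - x k)))
      map_add' := by
        intro P Q
        ext (i | k | k) <;> simp [Finset.sum_add_distrib, add_mul]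
      map_smul' := by
        intro a P
        ext (i | k | k) <;> simp [Finset.mul_sum, mul_assoc] }
  let v : ι ⊕ κ ⊕ κ → ℝ := Sum.elim l (Sum.elim g (fun _ => 0))
  by_cases hv : v ∈ L '' (stdSimplex ℝ (ι × κ))
  · obtain ⟨P, hP, hPv⟩ := hv
    refine ⟨P, hP.1, fun i => ?_, fun k => ?_, fun k => ?_⟩
    · simpa [L, v] using congrFun hPv (Sum.inl i)
    · simpa [L, v] using congrFun hPv (Sum.inr (Sum.inl k))
    · simpa [L, v] using congrFun hPv (Sum.inr (Sum.inr k))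
  · exfalso
    obtain ⟨f, u, hf1, hf2⟩ := geometric_hahn_banach_closed_point
      ((convex_stdSimplex ℝ (ι × κ)).linear_image L)
      (((isCompact_stdSimplex ℝ (ι × κ)).image L.continuous_of_finiteDimensional).isClosed) hv
    have hfs : ∀ y : ι ⊕ κ ⊕ κ → ℝ, f y = ∑ a, y a * f (Pi.single a 1) := by
      intro y
      have := LinearMap.pi_apply_eq_sum_univ f.toLinearMap y
      simp only [ContinuousLinearMap.coe_coe, smul_eq_mul] at this
      rw [this]
      refine Finset.sum_congr rfl fun a _ => ?_
      congr 2
      ext b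
      simp [Pi.single_apply, eq_comm]
    set φ : ι → ℝ := fun i => f (Pi.single (Sum.inl i) 1) with hφ
    set ψ : κ → ℝ := fun k => f (Pi.single (Sum.inr (Sum.inl k)) 1) with hψ
    set χ : κ → ℝ := fun k => f (Pi.single (Sum.inr (Sum.inr k)) 1) with hχ
    have hfs' : ∀ y : ι ⊕ κ ⊕ κ → ℝ, f y = ∑ i, y (Sum.inl i) * φ i +
        (∑ k, y (Sum.inr (Sum.inl k)) * ψ k + ∑ k, y (Sum.inr (Sum.inr k)) * χ k) := by
      intro y
      rw [hfs y, Fintype.sum_sum_type, Fintype.sum_sum_type]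
    have hv' : u < ∑ i, l i * φ i + ∑ k, g k * ψ k := by
      have := hf2
      rw [hfs'] at this
      simpa [v] using this
    have hik : ∀ i k, φ i + (ψ k + χ k * (θ i - x k)) < u := by
      intro i k
      have := hf1 _ ⟨Pi.single (i, k) 1, single_mem_stdSimplex ℝ (i, k), rfl⟩
      rw [hfs'] at this
      have e1 : ∀ i', L (Pi.single (i, k) 1) (Sum.inl i') = if i' = i then 1 else 0 := by
        intro i'
        simp only [L, LinearMap.coe_mk, AddHom.coe_mk, Sum.elim_inl, Pi.single_apply, Prod.mk.injEq]
        by_cases h : i' = i <;> simp [h]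
      have e2 : ∀ k', L (Pi.single (i, k) 1) (Sum.inr (Sum.inl k')) = if k' = k then 1 else 0 := by
        intro k'
        simp only [L, LinearMap.coe_mk, AddHom.coe_mk, Sum.elim_inl, Sum.elim_inr, Pi.single_apply,
          Prod.mk.injEq]
        by_cases h : k' = k <;> simp [h]
      have e3 : ∀ k', L (Pi.single (i, k) 1) (Sum.inr (Sum.inr k')) =
          if k' = k then (θ i - x k) else 0 := by
        intro k'
        simp only [L, LinearMap.coe_mk, AddHom.coe_mk, Sum.elim_inr, Pi.single_apply,
          Prod.mk.injEq]
        by_cases h : k' = k <;> simp [h]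
      simp only [e1, e2, e3, ite_mul, one_mul, zero_mul, Finset.sum_ite_eq', Finset.mem_univ,
        if_true, Finset.sum_ite_eq] at this
      linarith
    have hκ : (Finset.univ : Finset κ).Nonempty := by
      by_contra h
      rw [Finset.not_nonempty_iff_eq_empty] at h
      rw [h] at hg1
      simp at hg1
    let c : ℝ → ℝ := Finset.univ.sup' hκ (fun k => fun t : ℝ => ψ k + χ k * (t - x k))
    have hcapp : ∀ t, c t = Finset.univ.sup' hκ (fun k => ψ k + χ k * (t - x k)) := by
      intro t; simp [c, Finset.sup'_apply]
    have hc : ConvexOn ℝ Set.univ c := by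
      refine ⟨convex_univ, ?_⟩
      intro a _ b _ p q hp hq hpq
      rw [hcapp]
      refine Finset.sup'_le _ _ fun k _ => ?_
      have ha : ψ k + χ k * (a - x k) ≤ c a := by
        rw [hcapp]; exact Finset.le_sup' (fun k => ψ k + χ k * (a - x k)) (Finset.mem_univ k)
      have hb : ψ k + χ k * (b - x k) ≤ c b := by
        rw [hcapp]; exact Finset.le_sup' (fun k => ψ k + χ k * (b - x k)) (Finset.mem_univ k)
      simp only [smul_eq_mul]
      have e : ψ k + χ k * (p * a + q * b - x k)
        = p * (ψ k + χ k * (a - x k)) + q * (ψ k + χ k * (b - x k)) := by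
        have : q = 1 - p := by linarith
        subst this; ring
      rw [e]
      gcongr
    have key := convex_order l θ g x hl1 hg1 hmean hθ hx hh c hc
    have h1 : ∑ k, g k * ψ k ≤ ∑ k, g k * c (x k) := by
      refine Finset.sum_le_sum fun k _ => mul_le_mul_of_nonneg_left ?_ (hg0 k)
      rw [hcapp]
      have := Finset.le_sup' (fun k' => ψ k' + χ k' * (x k - x k')) (Finset.mem_univ k)
      simp only [sub_self, mul_zero, add_zero] at this
      exact this
    have h2 : ∑ i, l i * c (θ i) ≤ ∑ i, l i * (u - φ i) := by
      refine Finset.sum_le_sum fun i _ => mul_le_mul_of_nonneg_left ?_ (hl0 i)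
      rw [hcapp]
      refine Finset.sup'_le _ _ fun k _ => ?_
      linarith [hik i k]
    have h3 : ∑ i, l i * (u - φ i) = u - ∑ i, l i * φ i := by
      simp only [mul_sub, Finset.sum_sub_distrib, ← Finset.sum_mul, hl1, one_mul]
    linarith

open MeasureTheory in
lemma int_step (q s : ℝ) (hq : 0 ≤ q) (hs : 0 ≤ s) :
    ∫ x in (0:ℝ)..s, (if q ≤ x then (1:ℝ) else 0) = max (s - q) 0 := by
  rw [intervalIntegral.integral_of_le hs]
  have : (fun x => if q ≤ x then (1:ℝ) else 0) = (Set.Ici q).indicator (fun _ => 1) := by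
    ext x; simp [Set.indicator_apply]
  rw [this, integral_congr_ae (ae_restrict_of_ae
    (indicator_ae_eq_of_ae_eq_set (Ioi_ae_eq_Ici (a := q)).symm)),
    setIntegral_indicator measurableSet_Ioi]
  have e : Set.Ioc 0 s ∩ Set.Ioi q = Set.Ioc q s := by
    ext x; simp only [Set.mem_inter_iff, Set.mem_Ioc, Set.mem_Ioi]
    constructor
    · rintro ⟨⟨_, h⟩, h'⟩; exact ⟨h', h⟩
    · rintro ⟨h, h'⟩; exact ⟨⟨by linarith, h'⟩, h⟩
  rw [e]
  simp [Measure.real, ENNReal.toReal_ofReal']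

lemma int_step_integrable (q a b : ℝ) :
    IntervalIntegrable (fun x => if q ≤ x then (1:ℝ) else 0) MeasureTheory.volume a b := by
  apply Monotone.intervalIntegrable
  intro x y hxy
  by_cases h : q ≤ x
  · simp [h, h.trans hxy]
  · simp only [h, if_false]; split_ifs <;> norm_num

lemma int_sum {ι : Type*} (T : Finset ι) (w x : ι → ℝ) (hx : ∀ i ∈ T, 0 ≤ x i) (s : ℝ)
    (hs : 0 ≤ s) :
    ∫ t in (0:ℝ)..s, (∑ i ∈ T.filter (fun i => x i ≤ t), w i) =
      ∑ i ∈ T, w i * max (s - x i) 0 := by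
  have : (fun t => ∑ i ∈ T.filter (fun i => x i ≤ t), w i) =
      fun t => ∑ i ∈ T, w i * (if x i ≤ t then (1:ℝ) else 0) := by
    ext t; rw [Finset.sum_filter]; refine Finset.sum_congr rfl fun i _ => by simp
  rw [this, intervalIntegral.integral_finsetSum
    (fun i _ => (int_step_integrable (x i) 0 s).const_mul (w i))]
  refine Finset.sum_congr rfl fun i hi => ?_
  rw [intervalIntegral.integral_const_mul, int_step _ _ (hx i hi) hs]

lemma MPC_iff (S : Setup n) (g : ℝ →₀ ℝ) (hg : IsDist g) :
    MPCprior S g ↔ (∀ s ∈ Set.Icc (0:ℝ) 1, ∑ q ∈ g.support, g q * max (s - q) 0 ≤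
      ∑ i, S.lam i * max (s - S.theta i) 0) ∧
      ∑ i, S.lam i * S.theta i = ∑ q ∈ g.support, g q * q := by
  have h1 : ∀ s, 0 ≤ s → ∫ x in (0:ℝ)..s, cdf g x = ∑ q ∈ g.support, g q * max (s - q) 0 :=
    fun s hs => int_sum g.support g (fun q => q) (fun q hq => (hg.2.1 q hq).1) s hs
  have h2 : ∀ s, 0 ≤ s → ∫ x in (0:ℝ)..s, priorCdf S x =
      ∑ i, S.lam i * max (s - S.theta i) 0 :=
    fun s hs => int_sum Finset.univ S.lam S.theta (fun i _ => (S.theta_mem i).1) s hs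
  have e1 : ∑ q ∈ g.support, g q * max (1 - q) 0 = 1 - ∑ q ∈ g.support, g q * q := by
    rw [← hg.2.2, ← Finset.sum_sub_distrib, hg.2.2]
    refine Finset.sum_congr rfl fun q hq => ?_
    rw [max_eq_left (by linarith [(hg.2.1 q hq).2])]; ring
  have e2 : ∑ i, S.lam i * max (1 - S.theta i) 0 = 1 - ∑ i, S.lam i * S.theta i := by
    rw [← S.lam_sum, ← Finset.sum_sub_distrib, S.lam_sum]
    refine Finset.sum_congr rfl fun i _ => ?_
    rw [max_eq_left (by linarith [(S.theta_mem i).2])]; ring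
  unfold MPCprior
  rw [h1 1 zero_le_one, h2 1 zero_le_one, e1, e2]
  refine and_congr ?_ ?_
  · refine forall₂_congr fun s hs => ?_
    rw [h1 s hs.1, h2 s hs.1]
  · constructor <;> intro h <;> linarith

lemma forward_dir (S : Setup n) (g : ℝ →₀ ℝ) (hg : IsDist g) (gt : Fin n → ℝ →₀ ℝ)
    (hp : IsPredictor gt) (hc : PerfectlyCalibrated S gt)
    (hm : ∀ q, g q = ∑ i, S.lam i * gt i q) : MPCprior S g := by
  rw [MPC_iff S g hg]
  have hsub : ∀ i, (gt i).support ⊆ g.support := by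
    intro i q hq
    rw [Finsupp.mem_support_iff] at hq ⊢
    have h0 : 0 < gt i q := lt_of_le_of_ne ((hp i).1 q) (Ne.symm hq)
    rw [hm]
    have : 0 < ∑ i, S.lam i * gt i q :=
      Finset.sum_pos' (fun j _ => mul_nonneg (S.lam_pos j).le ((hp j).1 q))
        ⟨i, Finset.mem_univ i, mul_pos (S.lam_pos i) h0⟩
    exact this.ne'
  have hsum : ∀ i, ∑ q ∈ g.support, gt i q = 1 := by
    intro i
    rw [← (hp i).2.2]
    refine (Finset.sum_subset (hsub i) fun q _ h => ?_).symm
    simpa using h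
  have hcal : ∀ q ∈ g.support, ∑ i, S.lam i * gt i q * S.theta i = g q * q := by
    intro q hq
    have hq0 : g q ≠ 0 := by simpa using hq
    have hqs : q ∈ suppF gt := by
      by_contra h
      apply hq0
      rw [hm]
      refine Finset.sum_eq_zero fun i _ => ?_
      have : gt i q = 0 := by
        by_contra h'
        exact h (by simp only [suppF, Finset.mem_biUnion]; exact ⟨i, Finset.mem_univ i, by simpa using h'⟩)
      rw [this, mul_zero]
    have := hc q hqs
    unfold kappa marginal at this
    rw [← hm, div_eq_iff hq0] at this
    rw [this]; ring
  have hswap : ∀ F : Fin n → ℝ, ∑ i, S.lam i * F i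
      = ∑ q ∈ g.support, ∑ i, S.lam i * gt i q * F i := by
    intro F
    rw [Finset.sum_comm]
    refine Finset.sum_congr rfl fun i _ => ?_
    rw [← Finset.sum_mul, ← Finset.mul_sum, hsum, mul_one]
  constructor
  · intro s _
    rw [hswap]
    refine Finset.sum_le_sum fun q hq => ?_
    have hnn : ∀ i, 0 ≤ S.lam i * gt i q := fun i => mul_nonneg (S.lam_pos i).le ((hp i).1 q)
    rw [mul_max_of_nonneg _ _ (hg.1 q), mul_zero]
    refine max_le ?_ (Finset.sum_nonneg fun i _ => mul_nonneg (hnn i) (le_max_right _ _))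
    have : g q * (s - q) = ∑ i, S.lam i * gt i q * (s - S.theta i) := by
      simp only [mul_sub, Finset.sum_sub_distrib, ← Finset.sum_mul, ← hm]
      rw [hcal q hq]
    rw [this]
    exact Finset.sum_le_sum fun i _ => mul_le_mul_of_nonneg_left (le_max_left _ _) (hnn i)
  · rw [hswap]
    exact Finset.sum_congr rfl hcal

lemma backward_dir (S : Setup n) (g : ℝ →₀ ℝ) (hg : IsDist g) (h : MPCprior S g) :
    ∃ gt : Fin n → ℝ →₀ ℝ, IsPredictor gt ∧ PerfectlyCalibrated S gt ∧
        ∀ q, g q = ∑ i, S.lam i * gt i q := by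
  classical
  rw [MPC_iff S g hg] at h
  have cs : ∀ F : ℝ → ℝ, ∑ k : g.support, F k = ∑ q ∈ g.support, F q :=
    fun F => Finset.sum_coe_sort g.support F
  obtain ⟨P, hP0, hP1, hP2, hP3⟩ := strassen S.lam S.theta (fun k : g.support => g k)
    (fun k : g.support => (k : ℝ)) (fun i => (S.lam_pos i).le) (fun k => hg.1 k) S.lam_sum
    (by rw [cs g]; exact hg.2.2) (by rw [cs (fun q => g q * q)]; exact h.2)
    S.theta_mem (fun k => hg.2.1 k k.2)
    (fun s hs => by rw [cs (fun q => g q * max (s - q) 0)]; exact h.1 s hs)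
  let Q : Fin n → ℝ → ℝ := fun i q => if hq : q ∈ g.support then P (i, ⟨q, hq⟩) / S.lam i else 0
  have hQ : ∀ i q, q ∉ g.support → Q i q = 0 := fun i q hq => by simp only [Q, dif_neg hq]
  have hQs : ∀ i (k : g.support), Q i k = P (i, k) / S.lam i := fun i k => by
    simp only [Q, dif_pos k.2]
  have hQl : ∀ i (k : g.support), S.lam i * Q i k = P (i, k) := fun i k => by
    rw [hQs, mul_div_cancel₀ _ (S.lam_pos i).ne']
  let gt : Fin n → ℝ →₀ ℝ := fun i => Finsupp.onFinset g.support (Q i) (fun q hq => by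
    by_contra h'; exact hq (hQ i q h'))
  have hgt : ∀ i q, gt i q = Q i q := fun i q => rfl
  have hsub : ∀ i, (gt i).support ⊆ g.support := fun i => Finsupp.support_onFinset_subset
  have hmarg : ∀ q, g q = ∑ i, S.lam i * gt i q := by
    intro q
    by_cases hq : q ∈ g.support
    · have := hP2 ⟨q, hq⟩
      simp only at this
      rw [← this]
      exact Finset.sum_congr rfl fun i _ => (hQl i ⟨q, hq⟩).symm
    · simp only [hgt, hQ _ q hq, mul_zero, Finset.sum_const_zero]
      simpa using hq
  refine ⟨gt, fun i => ⟨fun q => ?_, fun q hq => hg.2.1 q (hsub i hq), ?_⟩, ?_, hmarg⟩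
  · rw [hgt]
    simp only [Q]
    split_ifs
    · exact div_nonneg (hP0 _) (S.lam_pos i).le
    · exact le_rfl
  · rw [Finset.sum_subset (hsub i) (fun q _ hq => by simpa using hq), ← cs (fun q => gt i q)]
    simp only [hgt, hQs]
    rw [← Finset.sum_div, hP1, div_self (S.lam_pos i).ne']
  · intro q hq
    simp only [suppF, Finset.mem_biUnion] at hq
    obtain ⟨i, -, hi⟩ := hq
    have hqg := hsub i hi
    have hq0 : g q ≠ 0 := by simpa using hqg
    unfold kappa marginal
    rw [← hmarg, div_eq_iff hq0]
    have h3 := hP3 ⟨q, hqg⟩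
    simp only [mul_sub, Finset.sum_sub_distrib, ← Finset.sum_mul] at h3
    have h2 := hP2 ⟨q, hqg⟩
    simp only at h2
    rw [h2] at h3
    have : ∑ i, S.lam i * gt i q * S.theta i = ∑ i, P (i, ⟨q, hqg⟩) * S.theta i :=
      Finset.sum_congr rfl fun j _ => by rw [← hQl j ⟨q, hqg⟩]; rfl
    rw [this]
    linarith

/-- A finitely supported distribution `g` on `[0,1]` is the marginal of
some perfectly calibrated predictor iff it is a mean-preserving contraction of the
distribution placing mass `λ_i` at `θ_i`. -/
theorem statement3 {n : ℕ} (S : Setup n) (g : ℝ →₀ ℝ) (hg : IsDist g) :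
    (∃ gt : Fin n → ℝ →₀ ℝ, IsPredictor gt ∧ PerfectlyCalibrated S gt ∧
        ∀ q, g q = ∑ i, S.lam i * gt i q) ↔ MPCprior S g := by
  exact ⟨fun ⟨gt, hp, hc, hm⟩ => forward_dir S g hg gt hp hc hm, backward_dir S g hg⟩

end PersuasiveCalibration
end
end
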